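/- arXiv:1407.5236 — 2 statements merged into one kernel-verified Lean document; each statement's English description precedes it below -/
import Mathlib

section
/- For every integer t ≥ 0 there exists an integer s ≥ 0 such that for every finite simple graph G, if K_{t+1} is not a minor of G, then V(G) can be partitioned into t pairwise disjoint (possibly empty) sets X_1, …, X_t whose union is V(G), such that for each i with 1 ≤ i ≤ t the subgraph of G induced on X_i has maximum degree at most s. -/
/-- `G` has a `K_n` minor: there are `n` nonempty, pairwise disjoint branch sets,
each inducing a connected subgraph, with an edge of `G` between any two of them. -/
def HasCompleteMinor {V : Type} (G : SimpleGraph V) (n : ℕ) : Prop :=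
  ∃ f : Fin n → Set V,
    (∀ i, (f i).Nonempty) ∧
    (∀ i, (G.induce (f i)).Connected) ∧
    (Pairwise fun i j => Disjoint (f i) (f j)) ∧
    (∀ i j, i ≠ j → ∃ x ∈ f i, ∃ y ∈ f j, G.Adj x y)

/-- Every vertex of `X` has at most `s` neighbours (w.r.t. `G`) inside `X`;
equivalently the subgraph of `G` induced on `X` has maximum degree at most `s`. -/
def MaxDegWithinLE {V : Type} (G : SimpleGraph V) (X : Set V) (s : ℕ) : Prop :=
  ∀ v ∈ X, ({u | u ∈ X ∧ G.Adj v u}).ncard ≤ s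

/-- A family of branch sets of a `K_n` model. -/
def IsModel {V : Type} (G : SimpleGraph V) (n : ℕ) (f : Fin n → Set V) : Prop :=
    (∀ i, (f i).Nonempty) ∧
    (∀ i, (G.induce (f i)).Connected) ∧
    (Pairwise fun i j => Disjoint (f i) (f j)) ∧
    (∀ i j, i ≠ j → ∃ x ∈ f i, ∃ y ∈ f j, G.Adj x y)

/-- Quotient graph on `A` with fibres of `h` as branch sets. -/
def QG {V : Type} (G : SimpleGraph V) (h : V → V) (A : Set V) : SimpleGraph A where
  Adj a b := a ≠ b ∧ ∃ x y, h x = a ∧ h y = b ∧ G.Adj x y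
  symm := ⟨fun _ _ ⟨hn, x, y, hx, hy, hxy⟩ => ⟨hn.symm, y, x, hy, hx, hxy.symm⟩⟩
  loopless := ⟨fun _ hn => hn.1 rfl⟩

theorem fiber_connected {V : Type} (G : SimpleGraph V) (h : V → V)
    (h2 : ∀ x, h x = x ∨ G.Adj x (h x)) (a : V) (ha : h a = a) :
    (G.induce {x | h x = a}).Connected := by
  have key : ∀ x : {x | h x = a}, (G.induce {x | h x = a}).Reachable x ⟨a, ha⟩ := by
    rintro ⟨x, hx⟩
    have hx' : h x = a := hx
    rcases h2 x with h3 | h3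
    · have : x = a := h3.symm.trans hx'
      subst this
      exact SimpleGraph.Reachable.refl _
    · apply SimpleGraph.Adj.reachable
      rw [hx'] at h3
      exact h3
  have : Nonempty {x | h x = a} := ⟨⟨a, ha⟩⟩
  exact ⟨fun x y => (key x).trans (key y).symm⟩

theorem lift_model {V : Type} (G : SimpleGraph V) (h : V → V) (A : Set V)
    (h1 : ∀ a ∈ A, h a = a) (h2 : ∀ x, h x = x ∨ G.Adj x (h x)) (n : ℕ)
    (hm : HasCompleteMinor (QG G h A) n) :
    ∃ f, IsModel G n f ∧ ∀ i, ∀ x ∈ f i, h x ∈ A := by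
  obtain ⟨f, f1, f2, f3, f4⟩ := hm
  refine ⟨fun i => {x | ∃ hx : h x ∈ A, (⟨h x, hx⟩ : A) ∈ f i}, ⟨?_, ?_, ?_, ?_⟩, ?_⟩
  · intro i
    obtain ⟨⟨a, ha⟩, hi⟩ := f1 i
    refine ⟨a, ?_⟩
    simp only [Set.mem_ofPred_eq, h1 a ha]
    exact ⟨ha, hi⟩
  · intro i
    set U : Set V := {x | ∃ hx : h x ∈ A, (⟨h x, hx⟩ : A) ∈ f i} with hU
    have fib : ∀ (a : A), a ∈ f i → ∀ x y (hx : x ∈ U) (hy : y ∈ U), h x = a → h y = a →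
        (G.induce U).Reachable ⟨x, hx⟩ ⟨y, hy⟩ := by
      intro a ha x y hx hy hxa hya
      have hsub : {x | h x = a} ⊆ U := by
        intro z hz
        have hz' : h z = a := hz
        refine ⟨by rw [hz']; exact a.2, ?_⟩
        simpa [hz'] using ha
      have := (fiber_connected G h h2 a (h1 a a.2)).preconnected ⟨x, hxa⟩ ⟨y, hya⟩
      exact this.map (SimpleGraph.induceHomOfLE G hsub).toHom
    have key : ∀ (a b : f i), ((QG G h A).induce (f i)).Walk a b →
        ∀ x y (hx : x ∈ U) (hy : y ∈ U), h x = a.1 → h y = b.1 →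
        (G.induce U).Reachable ⟨x, hx⟩ ⟨y, hy⟩ := by
      intro a b p
      induction p with
      | nil => intro x y hx hy hxa hya; exact fib _ (Subtype.property _) x y hx hy hxa hya
      | @cons a c b hac p ih =>
        intro x y hx hy hxa hya
        obtain ⟨_, x', y', hx', hy', hadj⟩ := hac
        have mem : ∀ (a : f i) z, h z = a.1 → z ∈ U := by
          intro a z hz
          refine ⟨by rw [hz]; exact a.1.2, ?_⟩
          simp [hz]
        refine (fib a.1 a.2 x x' hx (mem a _ hx') hxa hx').trans ?_
        refine SimpleGraph.Reachable.trans ?_ (ih y' y (mem c _ hy') hy hy' hya)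
        apply SimpleGraph.Adj.reachable
        exact hadj
    have : Nonempty U := by
      obtain ⟨⟨a, ha⟩, hi⟩ := f1 i
      refine ⟨a, ?_⟩
      simp only [hU, Set.mem_ofPred_eq, h1 a ha]
      exact ⟨ha, hi⟩
    refine ⟨?_⟩
    rintro ⟨x, hx⟩ ⟨y, hy⟩
    obtain ⟨hxA, hxi⟩ := id hx
    obtain ⟨hyA, hyi⟩ := id hy
    obtain ⟨p⟩ := (f2 i).preconnected ⟨_, hxi⟩ ⟨_, hyi⟩
    exact key _ _ p x y hx hy rfl rfl
  · intro i j hij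
    rw [Set.disjoint_left]
    rintro x ⟨hx, hi⟩ ⟨_, hj⟩
    exact Set.disjoint_left.1 (f3 hij) hi hj
  · intro i j hij
    obtain ⟨a, ha, b, hb, _, x, y, hx, hy, hxy⟩ := f4 i j hij
    refine ⟨x, ⟨by rw [hx]; exact a.2, by simpa [hx] using ha⟩,
      y, ⟨by rw [hy]; exact b.2, by simpa [hy] using hb⟩, hxy⟩
  · rintro i x ⟨hx, _⟩
    exact hx

theorem cone_model {V : Type} (G : SimpleGraph V) (n : ℕ) (f : Fin n → Set V)
    (hf : IsModel G n f) (v : V) (hv : ∀ i, v ∉ f i) (hv2 : ∀ i, ∃ x ∈ f i, G.Adj v x) :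
    HasCompleteMinor G (n + 1) := by
  obtain ⟨f1, f2, f3, f4⟩ := hf
  refine ⟨Fin.cons {v} f, ?_, ?_, ?_, ?_⟩
  · intro i
    refine Fin.cases ?_ (fun i => ?_) i
    · simp
    · simpa using f1 i
  · intro i
    refine Fin.cases ?_ (fun i => ?_) i
    · show (G.induce ({v} : Set V)).Connected
      have : Nonempty ({v} : Set V) := ⟨⟨v, rfl⟩⟩
      refine ⟨?_⟩
      intro x y
      rw [Subsingleton.elim x y]
    · exact f2 i
  · intro i j
    refine Fin.cases ?_ (fun i => ?_) i <;> refine Fin.cases ?_ (fun j => ?_) j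
    · simp
    · intro _; simpa using hv j
    · intro _; simpa using hv i
    · intro h; simpa using f3 (by simpa using h)
  · intro i j
    refine Fin.cases ?_ (fun i => ?_) i <;> refine Fin.cases ?_ (fun j => ?_) j
    · simp
    · intro _; simpa using hv2 j
    · intro _
      obtain ⟨x, hx, hvx⟩ := hv2 i
      exact ⟨x, by simpa using hx, v, by simp, hvx.symm⟩
    · intro h; simpa using f4 i j (by simpa using h)

theorem minor_mono {V : Type} {G G' : SimpleGraph V} (hle : G' ≤ G) (n : ℕ)
    (hm : HasCompleteMinor G' n) : HasCompleteMinor G n := by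
  obtain ⟨f, f1, f2, f3, f4⟩ := hm
  refine ⟨f, f1, fun i => (f2 i).mono ?_, f3, fun i j hij => ?_⟩
  · intro a b hab; exact hle hab
  · obtain ⟨x, hx, y, hy, h⟩ := f4 i j hij
    exact ⟨x, hx, y, hy, hle h⟩

open Classical in
/-- degree -/
noncomputable def dg {V : Type} [Fintype V] (G : SimpleGraph V) (v : V) : ℕ :=
  (Finset.univ.filter fun u => G.Adj v u).card

open Classical in
/-- number of adjacent ordered pairs -/
noncomputable def nD {V : Type} [Fintype V] (G : SimpleGraph V) : ℕ :=
  (Finset.univ.filter fun p : V × V => G.Adj p.1 p.2).card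

theorem nD_eq {V : Type} [Fintype V] (G : SimpleGraph V) : nD G = ∑ v, dg G v := by
  classical
  unfold nD dg
  simp only [Finset.card_filter]
  rw [Fintype.sum_prod_type]

open Classical in
theorem contract_count {V : Type} [Fintype V] (G : SimpleGraph V) (u v : V) (huv : G.Adj u v) :
    nD G ≤ nD (QG G (fun x => if x = v then u else x) {x | x ≠ v}) + 2 +
      2 * (Finset.univ.filter fun x => G.Adj u x ∧ G.Adj v x).card := by
  set C := Finset.univ.filter fun x => G.Adj u x ∧ G.Adj v x with hC
  set Q := QG G (fun x => if x = v then u else x) {x | x ≠ v} with hQ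
  set bad : Finset (V × V) := {(u, v), (v, u)} ∪ (C.image (fun x => (v, x)) ∪ C.image (fun x => (x, v)))
    with hbad
  have hb : bad.card ≤ 2 + 2 * C.card := by
    calc bad.card ≤ _ := Finset.card_union_le _ _
      _ ≤ 2 + (C.card + C.card) := by
        refine add_le_add Finset.card_le_two ((Finset.card_union_le _ _).trans ?_)
        exact add_le_add Finset.card_image_le Finset.card_image_le
      _ = _ := by ring
  have hne : u ≠ v := huv.ne
  let φ : V → {x : V | x ≠ v} := fun x => ⟨if x = v then u else x, by
    simp only [Set.mem_ofPred_eq]; split_ifs <;> assumption⟩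
  have hφ : ∀ x y, φ x = φ y → x = y ∨ (x = u ∧ y = v) ∨ (x = v ∧ y = u) := by
    intro x y hxy
    have := congrArg Subtype.val hxy
    simp only [φ] at this
    split_ifs at this <;> simp_all
  have hinj : ((Finset.univ.filter fun p : V × V => G.Adj p.1 p.2) \ bad).card ≤ nD Q := by
    unfold nD
    refine Finset.card_le_card_of_injOn (fun p => (φ p.1, φ p.2)) ?_ ?_
    · rintro ⟨x, y⟩ hp
      simp only [Finset.coe_sdiff, Set.mem_sdiff, Finset.mem_coe, Finset.mem_filter,
        Finset.mem_univ, true_and, hbad, Finset.mem_union, not_or] at hp ⊢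
      refine ⟨?_, x, y, rfl, rfl, hp.1⟩
      intro h
      have := hp.1.ne
      rcases hφ x y h with h | h | h
      · exact this h
      · apply hp.2.1; simp [h.1, h.2]
      · apply hp.2.1; simp [h.1, h.2]
    · rintro ⟨x, y⟩ hp ⟨x', y'⟩ hp' h
      simp only [Finset.coe_sdiff, Set.mem_sdiff, Finset.mem_coe, Finset.mem_filter,
        Finset.mem_univ, true_and, hbad, Finset.mem_union, not_or, Finset.mem_insert,
        Finset.mem_singleton, Finset.mem_image, hC, not_exists, not_and, Prod.mk.injEq] at hp hp' h ⊢
      have e1 := hφ _ _ h.1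
      have e2 := hφ _ _ h.2
      have s1 := hp.1.symm
      have s2 := hp'.1.symm
      have := G.loopless.irrefl
      obtain ⟨p1, p2, p3, p4⟩ := hp
      obtain ⟨q1, q2, q3, q4⟩ := hp'
      replace p3 := p3 y
      replace p4 := p4 x
      replace q3 := q3 y'
      replace q4 := q4 x'
      clear hb hφ h
      rcases e1 with e1 | ⟨e1, e1'⟩ | ⟨e1, e1'⟩ <;> rcases e2 with e2 | ⟨e2, e2'⟩ | ⟨e2, e2'⟩ <;>
        subst_vars <;> simp_all
  have : nD G ≤ ((Finset.univ.filter fun p : V × V => G.Adj p.1 p.2) \ bad).card + bad.card := by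
    unfold nD
    exact Finset.card_le_card_sdiff_add_card
  omega

theorem density (n : ℕ) : ∃ c : ℕ, ∀ (V : Type) [Fintype V] (G : SimpleGraph V),
    ¬ HasCompleteMinor G n → nD G ≤ c * Fintype.card V := by
  classical
  induction n with
  | zero =>
    refine ⟨0, fun V _ G h => absurd ?_ h⟩
    exact ⟨fun _ => ∅, fun i => i.elim0, fun i => i.elim0, fun i => i.elim0, fun i => i.elim0⟩
  | succ n ih =>
    obtain ⟨c, hc⟩ := ih
    refine ⟨2 * c + 2, ?_⟩
    have main : ∀ m, ∀ (V : Type) [Fintype V] (G : SimpleGraph V), Fintype.card V = m →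
        ¬ HasCompleteMinor G (n + 1) → nD G ≤ (2 * c + 2) * Fintype.card V := by
      intro m
      induction m with
      | zero =>
        intro V _ G hV _
        have := Fintype.card_eq_zero_iff.1 hV
        simp [nD_eq]
      | succ m ihm =>
        intro V _ G hV hG
        by_contra hlt
        push Not at hlt
        by_cases hex : ∃ u v, G.Adj u v ∧
            (Finset.univ.filter fun x => G.Adj u x ∧ G.Adj v x).card ≤ c
        · obtain ⟨u, v, huv, hcom⟩ := hex
          have hcnt := contract_count G u v huv
          have hcard : Fintype.card {x : V | x ≠ v} = m := by
            have := Fintype.card_subtype_compl (fun x : V => x = v)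
            rw [Fintype.card_subtype_eq, hV] at this
            exact (Fintype.card_congr (Equiv.refl _)).trans this
          have hle := ihm {x : V | x ≠ v} (QG G (fun x => if x = v then u else x) {x | x ≠ v})
            hcard (by
              intro hm
              obtain ⟨f, hf, _⟩ := lift_model G _ _ (by
                intro a ha
                have : a ≠ v := ha
                simp [this]) (by
                intro x
                by_cases hx : x = v
                · right; subst hx; simpa using huv.symm
                · left; simp [hx]) _ hm
              exact hG ⟨f, hf⟩)
          rw [hcard] at hle
          rw [hV] at hlt
          nlinarith
        · push Not at hex
          have hv : ∃ v w, G.Adj v w := by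
            by_contra hno
            push Not at hno
            have : nD G = 0 := by simp [nD, hno]
            omega
          obtain ⟨v, w, hvw⟩ := hv
          have hlarge : c * Fintype.card {x : V | G.Adj v x} < nD (QG G id {x | G.Adj v x}) := by
            rw [nD_eq]
            calc c * Fintype.card {x : V | G.Adj v x} < (c + 1) * Fintype.card {x : V | G.Adj v x} := by
                  have : 0 < Fintype.card {x : V | G.Adj v x} :=
                    Fintype.card_pos_iff.2 ⟨⟨w, hvw⟩⟩
                  nlinarith
              _ = ∑ _x : {x : V | G.Adj v x}, (c + 1) := by simp [mul_comm]
              _ ≤ _ := by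
                refine Finset.sum_le_sum ?_
                rintro ⟨x, hx⟩ -
                refine (hex v x hx).trans_le ?_
                unfold dg
                refine Finset.card_le_card_of_surjOn Subtype.val ?_
                intro y hy
                simp only [Finset.coe_filter, Finset.mem_univ, true_and, Set.mem_ofPred_eq] at hy
                refine ⟨⟨y, hy.1⟩, ?_, rfl⟩
                simp only [Finset.coe_filter, Finset.mem_univ, true_and, Set.mem_ofPred_eq]
                refine ⟨?_, x, y, rfl, rfl, hy.2⟩
                intro h
                exact hy.2.ne (congrArg Subtype.val h)
          have hmin : HasCompleteMinor (QG G id {x | G.Adj v x}) n := by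
            by_contra hno
            exact absurd (hc _ _ hno) (by omega)
          obtain ⟨f, hf, hfA⟩ := lift_model G _ _ (by simp) (by simp) _ hmin
          refine hG (cone_model G n f hf v ?_ ?_)
          · intro i hi
            exact (hfA i v hi).ne rfl
          · intro i
            obtain ⟨x, hx⟩ := hf.1 i
            exact ⟨x, hx, hfA i x hx⟩
    exact fun V _ G h => main _ V G rfl h

/-- admissible partial contraction maps -/
def Good {V : Type} (G : SimpleGraph V) (A : Set V) (h : V → V) : Prop :=
  (∀ a ∈ A, h a = a) ∧ ∀ x, h x = x ∨ (h x ∈ A ∧ G.Adj x (h x))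

open Classical in
theorem contract_stars {V : Type} [Fintype V] (G : SimpleGraph V) (t c : ℕ)
    (hc : ∀ (V : Type) [Fintype V] (G : SimpleGraph V),
      ¬ HasCompleteMinor G (t + 1) → nD G ≤ c * Fintype.card V)
    (hG : ¬ HasCompleteMinor G (t + 1)) (A B : Finset V) (hAB : Disjoint A B)
    (hB : ∀ b ∈ B, t ≤ (A.filter fun a => G.Adj b a).card) :
    B.card ≤ c * A.card := by
  by_contra hlt
  push Not at hlt
  let asg : (V → V) → ℕ := fun h => (B.filter fun b => h b ≠ b).card
  let P : (V → V) → Prop := fun h => Good G (A : Set V) h ∧ asg h ≤ nD (QG G h (A : Set V))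
  obtain ⟨h, hh, hmax⟩ : ∃ h, P h ∧ ∀ h', P h' → asg h' ≤ asg h := by
    have hne : (Finset.univ.filter P).Nonempty :=
      ⟨id, by simp [P, Good, asg]⟩
    obtain ⟨h, h1, h2⟩ := Finset.exists_max_image _ asg hne
    exact ⟨h, by simpa using h1, fun h' hh' => h2 h' (by simpa using hh')⟩
  obtain ⟨⟨g1, g2⟩, hasg⟩ := hh
  have g2' : ∀ x, h x = x ∨ G.Adj x (h x) := fun x => (g2 x).imp id And.right
  have hd : nD (QG G h (A : Set V)) ≤ c * A.card := by
    have := hc _ (QG G h (A : Set V)) (fun hm => by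
      obtain ⟨f, hf, _⟩ := lift_model G h _ g1 g2' _ hm
      exact hG ⟨f, hf⟩)
    simpa using this
  obtain ⟨b, hbB, hb⟩ : ∃ b ∈ B, h b = b := by
    by_contra hno
    push Not at hno
    have : asg h = B.card := by
      simp only [asg]
      rw [Finset.filter_true_of_mem hno]
    omega
  have hbA : b ∉ A := fun hA => Finset.disjoint_left.1 hAB hA hbB
  by_cases hcl : ∀ a (ha : a ∈ A) a' (ha' : a' ∈ A), G.Adj b a → G.Adj b a' → a ≠ a' →
      (QG G h (A : Set V)).Adj ⟨a, ha⟩ ⟨a', ha'⟩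
  · obtain ⟨T, hT, hTc⟩ := Finset.exists_subset_card_eq (hB b hbB)
    let e := T.equivFinOfCardEq hTc
    have hTA : ∀ i, (e.symm i : V) ∈ A := fun i => (Finset.mem_filter.1 (hT (e.symm i).2)).1
    have hTb : ∀ i, G.Adj b (e.symm i : V) := fun i => (Finset.mem_filter.1 (hT (e.symm i).2)).2
    have hinj : ∀ i j, i ≠ j → (e.symm i : V) ≠ e.symm j := by
      intro i j hij hc
      exact hij (e.symm.injective (Subtype.ext hc))
    refine hG (cone_model G t (fun i => {x | h x = e.symm i}) ⟨?_, ?_, ?_, ?_⟩ b ?_ ?_)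
    · exact fun i => ⟨e.symm i, g1 _ (hTA i)⟩
    · exact fun i => fiber_connected G h g2' _ (g1 _ (hTA i))
    · intro i j hij
      rw [Set.disjoint_left]
      intro x hx hx'
      exact hinj i j hij (hx.symm.trans hx')
    · intro i j hij
      obtain ⟨_, x, y, hx, hy, hxy⟩ := hcl _ (hTA i) _ (hTA j) (hTb i) (hTb j) (hinj i j hij)
      exact ⟨x, hx, y, hy, hxy⟩
    · intro i hi
      have hi' : h b = e.symm i := hi
      rw [hb] at hi'
      exact hbA (hi' ▸ hTA i)
    · exact fun i => ⟨_, g1 _ (hTA i), hTb i⟩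
  · push Not at hcl
    obtain ⟨a, ha, a', ha', hba, hba', hne, hnadj⟩ := hcl
    let h' := Function.update h b a
    have hab : a ≠ b := fun e => hbA (e ▸ ha)
    have hb' : h' b = a := by simp [h']
    have hx' : ∀ x, x ≠ b → h' x = h x := fun x hx => by simp [h', hx]
    have hgood : Good G (A : Set V) h' := by
      refine ⟨fun x hx => ?_, fun x => ?_⟩
      · have hxb : x ≠ b := fun e => hbA (e ▸ hx)
        rw [hx' x hxb]; exact g1 x hx
      · by_cases hxb : x = b
        · subst hxb; right; rw [hb']; exact ⟨ha, hba⟩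
        · rw [hx' x hxb]; exact g2 x
    have hasg' : asg h' = asg h + 1 := by
      simp only [asg]
      have : (B.filter fun x => h' x ≠ x) = insert b (B.filter fun x => h x ≠ x) := by
        ext x
        by_cases hxb : x = b
        · subst hxb; simp [hb', hab, hbB]
        · simp [hx' x hxb, hxb]
      rw [this, Finset.card_insert_of_notMem (by simp [hb])]
    have hlt' : nD (QG G h (A : Set V)) < nD (QG G h' (A : Set V)) := by
      unfold nD
      apply Finset.card_lt_card
      rw [Finset.ssubset_iff_of_subset]
      · refine ⟨(⟨a, ha⟩, ⟨a', ha'⟩), ?_, ?_⟩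
        · simp only [Finset.mem_filter, Finset.mem_univ, true_and]
          refine ⟨fun e => hne (congrArg Subtype.val e), b, a', hb', ?_, hba'⟩
          rw [hx' a' (fun e => hbA (e ▸ ha'))]
          exact g1 _ ha'
        · simpa using hnadj
      · rintro ⟨x, y⟩ hxy
        simp only [Finset.mem_filter, Finset.mem_univ, true_and] at hxy ⊢
        obtain ⟨hn, p, q, hp, hq, hpq⟩ := hxy
        have hb2 : ∀ (z : (A : Set V)) p, h p = z → p ≠ b := by
          intro z p hp e
          subst e
          rw [hb] at hp
          exact hbA (hp ▸ z.2)
        exact ⟨hn, p, q, by rw [hx' p (hb2 x p hp)]; exact hp,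
          by rw [hx' q (hb2 y q hq)]; exact hq, hpq⟩
    have := hmax h' ⟨hgood, by omega⟩
    omega

open Classical in
theorem light_edge {V : Type} [Fintype V] (G : SimpleGraph V) (t c : ℕ)
    (hc : ∀ (V : Type) [Fintype V] (G : SimpleGraph V),
      ¬ HasCompleteMinor G (t + 1) → nD G ≤ c * Fintype.card V)
    (hG : ¬ HasCompleteMinor G (t + 1))
    (hdeg : ∀ v, 0 < dg G v → t ≤ dg G v) (hne : ∃ x y, G.Adj x y) :
    ∃ x y, G.Adj x y ∧ dg G x ≤ c * (c + 1) ∧ dg G y ≤ c * (c + 1) := by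
  by_contra hno
  push Not at hno
  set L := c * (c + 1) with hL
  let A := Finset.univ.filter fun v => L < dg G v
  let B := Finset.univ.filter fun v => 0 < dg G v ∧ dg G v ≤ L
  have hpos : ∀ x y, G.Adj x y → 0 < dg G x := by
    intro x y hxy
    exact Finset.card_pos.2 ⟨y, by simpa using hxy⟩
  have hAB : Disjoint A B := by
    rw [Finset.disjoint_left]
    intro x hx hx'
    simp only [A, B, Finset.mem_filter, Finset.mem_univ, true_and] at hx hx'
    omega
  have hBc : B.card ≤ c * A.card := by
    refine contract_stars G t c hc hG A B hAB ?_
    intro b hb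
    simp only [B, Finset.mem_filter, Finset.mem_univ, true_and] at hb
    refine (hdeg b hb.1).trans ?_
    unfold dg
    refine Finset.card_le_card ?_
    intro x hx
    simp only [Finset.mem_filter, Finset.mem_univ, true_and, A] at hx ⊢
    exact ⟨hno b x hx hb.2, hx⟩
  -- the support
  let S : Set V := {v | 0 < dg G v}
  have hS : Fintype.card S ≤ A.card + B.card := by
    rw [← Finset.card_union_of_disjoint hAB, ← Set.toFinset_card]
    refine Finset.card_le_card ?_
    intro x hx
    simp only [Set.mem_toFinset, S, Set.mem_ofPred_eq] at hx
    simp only [A, B, Finset.mem_union, Finset.mem_filter, Finset.mem_univ, true_and]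
    omega
  have hnS : nD G ≤ nD (QG G id S) := by
    unfold nD
    refine Finset.card_le_card_of_surjOn (fun p => (p.1.1, p.2.1)) ?_
    rintro ⟨x, y⟩ hxy
    simp only [Finset.coe_filter, Finset.mem_univ, true_and, Set.mem_ofPred_eq] at hxy
    refine ⟨(⟨x, hpos x y hxy⟩, ⟨y, hpos y x hxy.symm⟩), ?_, rfl⟩
    simp only [Finset.coe_filter, Finset.mem_univ, true_and, Set.mem_ofPred_eq]
    exact ⟨fun e => hxy.ne (congrArg Subtype.val e), x, y, rfl, rfl, hxy⟩
  have hdS : nD (QG G id S) ≤ c * Fintype.card S := hc _ _ (fun hm => by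
    obtain ⟨f, hf, _⟩ := lift_model G _ _ (by simp) (by simp) _ hm
    exact hG ⟨f, hf⟩)
  have hlow : A.card * (L + 1) ≤ nD G := by
    rw [nD_eq]
    calc A.card * (L + 1) = ∑ _x ∈ A, (L + 1) := by simp
      _ ≤ ∑ x ∈ A, dg G x := Finset.sum_le_sum (fun x hx => by
          simp only [A, Finset.mem_filter, Finset.mem_univ, true_and] at hx
          omega)
      _ ≤ _ := Finset.sum_le_sum_of_subset (Finset.subset_univ A)
  have hApos : 0 < A.card := by
    obtain ⟨x, y, hxy⟩ := hne
    apply Finset.card_pos.2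
    by_cases hx : dg G x ≤ L
    · exact ⟨y, by simpa [A] using hno x y hxy hx⟩
    · exact ⟨x, by simpa [A] using hx⟩
  have h1 : A.card * (L + 1) ≤ c * (A.card + c * A.card) :=
    hlow.trans (hnS.trans (hdS.trans (Nat.mul_le_mul_left c (hS.trans (by omega)))))
  have h2 : c * (A.card + c * A.card) = A.card * L := by rw [hL]; ring
  rw [h2] at h1
  nlinarith

open Classical in
/-- number of monochromatic neighbours -/
noncomputable def md {V : Type} [Fintype V] {t : ℕ} (G : SimpleGraph V) (k : V → Fin t) (v : V) : ℕ :=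
  (Finset.univ.filter fun u => k u = k v ∧ G.Adj v u).card

open Classical in
/-- Recolour `x`, with a colour not seen at `x`. -/
theorem recolour {V : Type} [Fintype V] {t : ℕ} (G G' : SimpleGraph V) (x : V) (k : V → Fin t)
    (s : ℕ) (hk : ∀ v, v ≠ x → md G' k v ≤ s) (i : Fin t) (hi : ∀ u, G.Adj x u → k u ≠ i)
    (hGG : ∀ u v, u ≠ x → v ≠ x → G.Adj u v → G'.Adj u v) :
    ∀ v, md G (Function.update k x i) v ≤ s := by
  intro v
  by_cases hv : v = x
  · subst hv
    have : md G (Function.update k v i) v = 0 := by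
      unfold md
      rw [Finset.card_eq_zero, Finset.filter_eq_empty_iff]
      rintro u - ⟨h1, h2⟩
      rw [Function.update_self, Function.update_of_ne h2.ne'] at h1
      exact hi u h2 h1
    omega
  · refine le_trans ?_ (hk v hv)
    unfold md
    refine Finset.card_le_card ?_
    intro u hu
    simp only [Finset.mem_filter, Finset.mem_univ, true_and] at hu ⊢
    rw [Function.update_of_ne hv] at hu
    by_cases hux : u = x
    · subst hux
      rw [Function.update_self] at hu
      exact absurd hu.1.symm (hi v hu.2.symm)
    · rw [Function.update_of_ne hux] at hu
      exact ⟨hu.1, hGG v u hv hux hu.2⟩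

open Classical in
/-- If few neighbours, a free colour exists. -/
theorem free_colour {V : Type} [Fintype V] {t : ℕ} (G : SimpleGraph V) (x : V) (k : V → Fin t)
    (h : dg G x < t) : ∃ i, ∀ u, G.Adj x u → k u ≠ i := by
  by_contra hno
  push Not at hno
  have : (Finset.univ : Finset (Fin t)).card ≤ (Finset.univ.filter fun u => G.Adj x u).card := by
    refine Finset.card_le_card_of_surjOn k ?_
    intro i _
    obtain ⟨u, hu, hk⟩ := hno i
    exact ⟨u, by simpa using hu, hk⟩
  simp only [Finset.card_univ, Fintype.card_fin] at this
  unfold dg at h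
  omega

theorem colouring {V : Type} [Fintype V] (t c : ℕ)
    (hc : ∀ (V : Type) [Fintype V] (G : SimpleGraph V),
      ¬ HasCompleteMinor G (t + 1) → nD G ≤ c * Fintype.card V) (k0 : V → Fin t)
    (G : SimpleGraph V) (hG : ¬ HasCompleteMinor G (t + 1)) :
    ∃ k : V → Fin t, ∀ v, md G k v ≤ c * (c + 1) := by
  classical
  induction G using WellFoundedLT.induction with
  | ind G ih =>
  by_cases hne : ∃ x y, G.Adj x y
  swap
  · push Not at hne
    exact ⟨k0, fun v => by simp [md, hne]⟩
  by_cases hdeg : ∀ v, 0 < dg G v → t ≤ dg G v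
  · obtain ⟨x, y, hxy, hx, hy⟩ := light_edge G t c hc hG hdeg hne
    have hlt : G.deleteEdges {s(x, y)} < G := by
      refine lt_of_le_of_ne (SimpleGraph.deleteEdges_le _) ?_
      intro e
      rw [← e] at hxy
      simp at hxy
    obtain ⟨k, hk⟩ := ih _ hlt (fun hm => hG (minor_mono hlt.le _ hm))
    refine ⟨k, fun v => ?_⟩
    have hmd : md G k v ≤ dg G v := by
      unfold md dg
      refine Finset.card_le_card ?_
      intro u hu
      simp only [Finset.mem_filter, Finset.mem_univ, true_and] at hu ⊢
      exact hu.2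
    by_cases hvx : v = x
    · subst hvx; exact hmd.trans hx
    by_cases hvy : v = y
    · subst hvy; exact hmd.trans hy
    refine le_trans ?_ (hk v)
    unfold md
    refine Finset.card_le_card ?_
    intro u hu
    simp only [Finset.mem_filter, Finset.mem_univ, true_and] at hu ⊢
    refine ⟨hu.1, ?_⟩
    simp [hu.2, hvx, hvy]
  · push Not at hdeg
    obtain ⟨x, hx0, hxt⟩ := hdeg
    have hlt : G.deleteEdges {e | x ∈ e} < G := by
      refine lt_of_le_of_ne (SimpleGraph.deleteEdges_le _) ?_
      intro e
      obtain ⟨y, hy⟩ := Finset.card_pos.1 hx0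
      simp only [Finset.mem_filter, Finset.mem_univ, true_and] at hy
      rw [← e] at hy
      simp at hy
    obtain ⟨k, hk⟩ := ih _ hlt (fun hm => hG (minor_mono hlt.le _ hm))
    obtain ⟨i, hi⟩ := free_colour G x k hxt
    refine ⟨_, recolour G _ x k _ (fun v _ => hk v) i hi ?_⟩
    intro u v hu hv huv
    simp [huv, Ne.symm hu, Ne.symm hv]

/-- For every integer `t ≥ 0` there is an integer `s ≥ 0` such that every finite
graph `G` with no `K_{t+1}` minor admits a partition of its vertex set into `t`
pairwise disjoint sets, each inducing a subgraph of maximum degree at most `s`. -/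
theorem hadwiger_defective (t : ℕ) :
    ∃ s : ℕ, ∀ (V : Type) [Fintype V] (G : SimpleGraph V),
      ¬ HasCompleteMinor G (t + 1) →
      ∃ X : Fin t → Set V,
        (Pairwise fun i j => Disjoint (X i) (X j)) ∧
        (⋃ i, X i) = Set.univ ∧
        ∀ i, MaxDegWithinLE G (X i) s := by
  classical
  obtain ⟨c, hc⟩ := density (t + 1)
  refine ⟨c * (c + 1), fun V _ G hG => ?_⟩
  have hk0 : Nonempty (V → Fin t) := by
    rcases Nat.eq_zero_or_pos t with h0 | h0
    · by_cases hV : Nonempty V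
      · obtain ⟨v⟩ := hV
        subst h0
        exact absurd (cone_model G 0 (fun _ => ∅)
          ⟨fun i => i.elim0, fun i => i.elim0, fun i => i.elim0, fun i => i.elim0⟩ v
          (fun i => i.elim0) (fun i => i.elim0)) hG
      · exact ⟨fun v => absurd ⟨v⟩ hV⟩
    · exact ⟨fun _ => ⟨0, h0⟩⟩
  obtain ⟨k0⟩ := hk0
  obtain ⟨k, hk⟩ := colouring t c hc k0 G hG
  refine ⟨fun i => {v | k v = i}, ?_, ?_, ?_⟩
  · intro i j hij
    rw [Set.disjoint_left]
    intro x hx hx'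
    exact hij (hx.symm.trans hx')
  · ext v; simp
  · intro i v hv
    have hv' : k v = i := hv
    subst hv'
    refine le_trans (le_of_eq ?_) (hk v)
    unfold md
    rw [← Set.ncard_coe_finset]
    congr 1
    ext u
    simp
end

section
/- Let t ≥ 0 be an integer and let r be a real number with r > t/2, such that every finite simple graph H with no K_{t+1} minor satisfies |E(H)| ≤ r·|V(H)|. Let s be the least integer greater than r(2r − t + 2). Then for every finite simple graph G, if K_{t+1} is not a minor of G, then V(G) can be partitioned into t sets X_1, …, X_t such that for each i with 1 ≤ i ≤ t the subgraph of G induced on X_i has maximum degree strictly less than s. -/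
namespace DefCol

lemma reach_union {W V : Type} (G : SimpleGraph V) (H : SimpleGraph W) (φ : W → Set V)
    (hc : ∀ w, (G.induce (φ w)).Connected)
    (hadj : ∀ w w', H.Adj w w' → ∃ x ∈ φ w, ∃ y ∈ φ w', G.Adj x y)
    (F : Set W) (w w' : F) (p : (H.induce F).Walk w w') :
    ∀ x (hx : x ∈ φ w) y (hy : y ∈ φ w'),
      (G.induce (⋃ z ∈ F, φ z)).Reachable
        ⟨x, Set.mem_biUnion w.2 hx⟩ ⟨y, Set.mem_biUnion w'.2 hy⟩ := by
  have base : ∀ (w : F) x (hx : x ∈ φ w) y (hy : y ∈ φ w),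
      (G.induce (⋃ z ∈ F, φ z)).Reachable
        ⟨x, Set.mem_biUnion w.2 hx⟩ ⟨y, Set.mem_biUnion w.2 hy⟩ := by
    intro w x hx y hy
    have h := (hc w).preconnected ⟨x, hx⟩ ⟨y, hy⟩
    have hsub : φ w ⊆ ⋃ z ∈ F, φ z := fun a ha => Set.mem_biUnion w.2 ha
    exact h.map (SimpleGraph.induceHomOfLE G hsub).toHom
  induction p with
  | nil => exact base _
  | @cons u v w huv p ih =>
    intro x hx y hy
    obtain ⟨x1, hx1, y1, hy1, h1⟩ := hadj u v huv
    refine (base u x hx x1 hx1).trans (SimpleGraph.Reachable.trans ?_ (ih y1 hy1 y hy))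
    exact SimpleGraph.Adj.reachable (by simpa using h1)

lemma minor_of_model {W V : Type} (G : SimpleGraph V) (H : SimpleGraph W) (φ : W → Set V)
    (hc : ∀ w, (G.induce (φ w)).Connected)
    (hd : Pairwise fun w w' => Disjoint (φ w) (φ w'))
    (hadj : ∀ w w', H.Adj w w' → ∃ x ∈ φ w, ∃ y ∈ φ w', G.Adj x y) {n : ℕ}
    (h : HasCompleteMinor H n) : HasCompleteMinor G n := by
  obtain ⟨f, hne, hcon, hdis, hedge⟩ := h
  refine ⟨fun i => ⋃ z ∈ f i, φ z, ?_, ?_, ?_, ?_⟩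
  · intro i
    obtain ⟨w, hw⟩ := hne i
    obtain ⟨x⟩ := (hc w).nonempty
    exact ⟨x.1, Set.mem_biUnion hw x.2⟩
  · intro i
    rw [SimpleGraph.connected_iff]
    constructor
    · rintro ⟨x, hx⟩ ⟨y, hy⟩
      have hx' := hx
      have hy' := hy
      simp only [Set.mem_iUnion] at hx' hy'
      obtain ⟨w, hw, hxw⟩ := hx'
      obtain ⟨w', hw', hyw⟩ := hy'
      obtain ⟨p⟩ := (hcon i).preconnected ⟨w, hw⟩ ⟨w', hw'⟩
      exact reach_union G H φ hc hadj (f i) _ _ p x hxw y hyw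
    · obtain ⟨w, hw⟩ := hne i
      obtain ⟨x⟩ := (hc w).nonempty
      exact ⟨⟨x.1, Set.mem_biUnion hw x.2⟩⟩
  · intro i j hij
    rw [Set.disjoint_left]
    intro x hx hy
    simp only [Set.mem_iUnion] at hx hy
    obtain ⟨w, hw, hxw⟩ := hx
    obtain ⟨w', hw', hyw⟩ := hy
    have hne : w ≠ w' := by
      rintro rfl
      exact Set.disjoint_left.1 (hdis hij) hw hw'
    exact Set.disjoint_left.1 (hd hne) hxw hyw
  · intro i j hij
    obtain ⟨w, hw, w', hw', hww⟩ := hedge i j hij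
    obtain ⟨x, hx, y, hy, hxy⟩ := hadj w w' hww
    exact ⟨x, Set.mem_biUnion hw hx, y, Set.mem_biUnion hw' hy, hxy⟩

lemma conn_singleton {V : Type} (G : SimpleGraph V) (v : V) :
    (G.induce ({v} : Set V)).Connected := by
  rw [SimpleGraph.connected_iff]
  refine ⟨?_, ⟨⟨v, rfl⟩⟩⟩
  intro a b
  rw [Subsingleton.elim a b]

lemma minor_of_hom {W V : Type} (G : SimpleGraph V) (H : SimpleGraph W) (g : W → V)
    (hg : Function.Injective g) (hadj : ∀ w w', H.Adj w w' → G.Adj (g w) (g w')) {n : ℕ}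
    (h : HasCompleteMinor H n) : HasCompleteMinor G n := by
  refine minor_of_model G H (fun w => {g w}) (fun w => conn_singleton G _) ?_ ?_ h
  · intro w w' hw
    simpa using hg.ne hw
  · intro w w' hw
    exact ⟨_, rfl, _, rfl, hadj _ _ hw⟩

/-- The graph obtained from a family of branch sets. -/
def quot {W V : Type} (G : SimpleGraph V) (φ : W → Set V) : SimpleGraph W where
  Adj w w' := w ≠ w' ∧ ∃ x ∈ φ w, ∃ y ∈ φ w', G.Adj x y
  symm := ⟨fun _ _ ⟨h, x, hx, y, hy, hxy⟩ => ⟨h.symm, y, hy, x, hx, hxy.symm⟩⟩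
  loopless := ⟨fun _ h => h.1 rfl⟩

lemma contract {V : Type} [Fintype V] (G : SimpleGraph V) (t : ℕ) (B : Set V)
    (hG : ¬ HasCompleteMinor G (t + 1))
    (hdeg : ∀ v, t ≤ (G.neighborSet v).ncard)
    (hst : ∀ v ∉ B, G.neighborSet v ⊆ B) (A : Finset V) :
    (∀ a ∈ A, a ∉ B) → ∃ φ : B → Set V,
      (∀ b, (G.induce (φ b)).Connected) ∧ (Pairwise fun b b' => Disjoint (φ b) (φ b')) ∧
      (∀ b : B, (b : V) ∈ φ b) ∧ (∀ b : B, ∀ x ∈ φ b, x = b ∨ x ∈ A) ∧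
      A.card ≤ (quot G φ).edgeSet.ncard := by
  classical
  induction A using Finset.induction_on with
  | empty =>
    intro _
    refine ⟨fun b => {(b : V)}, fun b => conn_singleton G _, ?_, ?_, ?_, ?_⟩
    · intro b b' h
      simpa [Subtype.ext_iff] using h
    · simp
    · simp
    · simp
  | insert a A ha ih =>
    intro hA
    obtain ⟨φ, hc, hd, hm, hsub, hcard⟩ := ih (fun x hx => hA x (Finset.mem_insert_of_mem hx))
    have haB : a ∉ B := hA a (Finset.mem_insert_self _ _)
    have haφ : ∀ b, a ∉ φ b := by
      intro b hb
      rcases hsub b a hb with h | h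
      · exact haB (h ▸ b.2)
      · exact ha h
    have key : ∃ b b' : B, b ≠ b' ∧ G.Adj a b ∧ G.Adj a b' ∧ ¬ (quot G φ).Adj b b' := by
      by_contra hcon
      push Not at hcon
      apply hG
      obtain ⟨S, hS, hScard⟩ := Set.exists_subset_card_eq (hdeg a)
      have e : Fin t ≃ S := by
        have : Nat.card S = t := by rw [Nat.card_coe_set_eq, hScard]
        exact (Finite.equivFinOfCardEq this).symm
      let β : Fin t → B := fun i => ⟨(e i : V), hst a haB (hS (e i).2)⟩
      have hβ : Function.Injective β := by
        intro i j hij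
        apply e.injective
        apply Subtype.ext
        exact congrArg (fun b : B => (b : V)) hij
      have hβa : ∀ i, G.Adj a (β i) := fun i => hS (e i).2
      refine ⟨Fin.cons {a} (fun i => φ (β i)), ?_, ?_, ?_, ?_⟩
      · intro i
        refine Fin.cases ?_ (fun i => ?_) i
        · exact ⟨a, rfl⟩
        · exact ⟨_, hm (β i)⟩
      · intro i
        refine Fin.cases ?_ (fun i => ?_) i
        · exact conn_singleton G a
        · exact hc (β i)
      · intro i j
        refine Fin.cases ?_ (fun i => ?_) i <;> refine Fin.cases ?_ (fun j => ?_) j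
        · intro h; exact absurd rfl h
        · intro _
          simpa using haφ (β j)
        · intro _
          simpa using haφ (β i)
        · intro h
          simp only [Fin.cons_succ]
          exact hd (hβ.ne (fun h' => h (by rw [h'])))
      · intro i j
        refine Fin.cases ?_ (fun i => ?_) i <;> refine Fin.cases ?_ (fun j => ?_) j
        · intro h; exact absurd rfl h
        · intro _
          exact ⟨a, rfl, _, hm (β j), hβa j⟩
        · intro _
          exact ⟨_, hm (β i), a, rfl, (hβa i).symm⟩
        · intro h
          have hne : β i ≠ β j := hβ.ne (fun h' => h (by rw [h']))
          exact (hcon _ _ hne (hβa i) (hβa j)).2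
    obtain ⟨b, b', hbb, hab, hab', hnadj⟩ := key
    have hle : ∀ c, φ c ⊆ Function.update φ b (φ b ∪ {a}) c := by
      intro c
      by_cases h : c = b
      · subst h; simp
      · simp [h]
    refine ⟨Function.update φ b (φ b ∪ {a}), ?_, ?_, ?_, ?_, ?_⟩
    · intro c
      by_cases h : c = b
      · subst h
        have h0 : Function.update φ c (φ c ∪ {a}) c = φ c ∪ {a} := Function.update_self ..
        rw [h0]
        have h2 : φ c ∪ {a} = φ c ∪ {(c : V), a} := by
          ext x
          simp only [Set.mem_union, Set.mem_singleton_iff, Set.mem_insert_iff]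
          constructor
          · tauto
          · rintro (h | rfl | h)
            · exact Or.inl h
            · exact Or.inl (hm c)
            · exact Or.inr h
        rw [h2]
        exact SimpleGraph.induce_union_connected (hc c).preconnected
          (SimpleGraph.induce_pair_connected_of_adj hab.symm).preconnected
          ⟨c, hm c, by simp⟩
      · have h0 : Function.update φ b (φ b ∪ {a}) c = φ c := Function.update_of_ne h ..
        rw [h0]
        exact hc c
    · intro c c' hcc
      by_cases h : c = b
      · have h' : c' ≠ b := fun h' => hcc (h.trans h'.symm)
        subst h
        simp only [Function.update_self, Function.update_of_ne h', Set.disjoint_union_left]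
        exact ⟨hd hcc, by simpa using haφ c'⟩
      · by_cases h' : c' = b
        · subst h'
          simp only [Function.update_self, Function.update_of_ne h, Set.disjoint_union_right]
          exact ⟨hd hcc, by simpa using haφ c⟩
        · simpa [h, h'] using hd hcc
    · intro c
      exact hle c (hm c)
    · intro c x hx
      by_cases h : c = b
      · subst h
        simp only [Function.update_self, Set.mem_union, Set.mem_singleton_iff] at hx
        rcases hx with hx | rfl
        · rcases hsub _ _ hx with h | h
          · exact Or.inl h
          · exact Or.inr (Finset.mem_insert_of_mem h)
        · exact Or.inr (Finset.mem_insert_self _ _)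
      · rw [Function.update_of_ne h] at hx
        rcases hsub _ _ hx with h | h
        · exact Or.inl h
        · exact Or.inr (Finset.mem_insert_of_mem h)
    · rw [Finset.card_insert_of_notMem ha]
      refine Nat.lt_of_le_of_lt hcard (Set.ncard_lt_ncard ?_ (Set.toFinite _))
      rw [Set.ssubset_iff_exists]
      refine ⟨?_, s(b, b'), ?_, ?_⟩
      · rw [SimpleGraph.edgeSet_subset_edgeSet]
        rintro c c' ⟨h, x, hx, y, hy, hxy⟩
        exact ⟨h, x, hle c hx, y, hle c' hy, hxy⟩
      · rw [SimpleGraph.mem_edgeSet]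
        exact ⟨hbb, a, by simp, b', hle b' (hm b'), hab'⟩
      · rw [SimpleGraph.mem_edgeSet]
        exact hnadj

lemma key (t : ℕ) (r : ℝ) (hrt : r > t / 2)
    (hR : ∀ (W : Type) [Fintype W] (H : SimpleGraph W),
      ¬ HasCompleteMinor H (t + 1) → (Nat.card H.edgeSet : ℝ) ≤ r * Fintype.card W)
    (s : ℤ) (hs : r * (2 * r - t + 2) < s)
    (V : Type) [Fintype V] [Nonempty V] (G : SimpleGraph V)
    (hG : ¬ HasCompleteMinor G (t + 1))
    (hdeg : ∀ v, t ≤ (G.neighborSet v).ncard)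
    (hst : ∀ u v, G.Adj u v → s ≤ (G.neighborSet u).ncard ∨ s ≤ (G.neighborSet v).ncard) :
    False := by
  classical
  let B : Finset V := Finset.univ.filter fun v => s ≤ (G.neighborSet v).ncard
  have hst' : ∀ v ∉ (B : Set V), G.neighborSet v ⊆ (B : Set V) := by
    intro v hv u hu
    simp only [B, Finset.coe_filter, Finset.mem_univ, true_and, Set.mem_ofPred_eq] at hv ⊢
    exact (hst v u hu).resolve_left hv
  obtain ⟨φ, hc, hd, hm, -, hcard⟩ := contract G t (B : Set V) hG hdeg hst' Bᶜ (by simp)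
  have hH : ¬ HasCompleteMinor (quot G φ) (t + 1) := fun h =>
    hG (minor_of_model G (quot G φ) φ hc hd (fun w w' hw => hw.2) h)
  have h1 := hR _ (quot G φ) hH
  have h2 := hR _ G hG
  have hBc : Fintype.card (B : Set V) = B.card := by simp
  rw [hBc, Nat.card_coe_set_eq] at h1
  have hA : ((Bᶜ : Finset V).card : ℝ) ≤ r * B.card := le_trans (by exact_mod_cast hcard) h1
  have hsum : (∑ v, ((G.neighborSet v).ncard : ℝ)) = 2 * (Nat.card G.edgeSet : ℝ) := by
    have := G.sum_degrees_eq_twice_card_edges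
    have h3 : ∀ v, (G.neighborSet v).ncard = G.degree v := by
      intro v
      rw [Set.ncard_eq_toFinset_card', ← SimpleGraph.card_neighborFinset_eq_degree]
      rfl
    have h4 : Nat.card G.edgeSet = G.edgeFinset.card := by
      rw [Nat.card_eq_fintype_card, SimpleGraph.edgeFinset_card]
    simp only [h3, h4]
    exact_mod_cast this
  have hlow : (s : ℝ) * B.card + t * (Bᶜ : Finset V).card ≤
      ∑ v, ((G.neighborSet v).ncard : ℝ) := by
    rw [← Finset.sum_add_sum_compl B]
    apply add_le_add
    · rw [mul_comm, ← nsmul_eq_mul]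
      apply Finset.card_nsmul_le_sum
      intro v hv
      have := (Finset.mem_filter.1 hv).2
      exact_mod_cast this
    · rw [mul_comm, ← nsmul_eq_mul]
      apply Finset.card_nsmul_le_sum
      intro v hv
      exact_mod_cast hdeg v
  have hV : (Fintype.card V : ℝ) = B.card + (Bᶜ : Finset V).card := by
    rw [← Finset.card_add_card_compl B]; push_cast; rfl
  have hVpos : (0 : ℝ) < Fintype.card V := by exact_mod_cast Fintype.card_pos
  rw [hV] at h2 hVpos
  have hBpos : (0 : ℝ) < B.card := by
    rcases (Nat.cast_nonneg (α := ℝ) B.card).lt_or_eq with h | h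
    · exact h
    · rw [← h] at hA hVpos
      linarith
  have h5 : (2 * r - t) * (Bᶜ : Finset V).card ≤ (2 * r - t) * (r * B.card) :=
    mul_le_mul_of_nonneg_left hA (by linarith)
  have h6 := mul_lt_mul_of_pos_right hs hBpos
  nlinarith

lemma colour (t : ℕ) (r : ℝ) (hrt : r > t / 2)
    (hR : ∀ (W : Type) [Fintype W] (H : SimpleGraph W),
      ¬ HasCompleteMinor H (t + 1) → (Nat.card H.edgeSet : ℝ) ≤ r * Fintype.card W)
    (s : ℤ) (hs : r * (2 * r - t + 2) < s) (n : ℕ) :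
    ∀ (V : Type) [Fintype V] (G : SimpleGraph V), Fintype.card V + G.edgeSet.ncard = n →
    ¬ HasCompleteMinor G (t + 1) →
    ∃ c : V → Fin t, ∀ v, (({u | c u = c v ∧ G.Adj v u}).ncard : ℤ) < s := by
  classical
  have hs0 : 0 < s := by
    have h0 : (0 : ℝ) ≤ t := Nat.cast_nonneg t
    have : (0 : ℝ) < r * (2 * r - t + 2) := mul_pos (by linarith) (by linarith)
    exact_mod_cast this.trans hs
  induction n using Nat.strong_induction_on with
  | _ n ih =>
    intro V _ G hn hG
    rcases isEmpty_or_nonempty V with hV | hV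
    · exact ⟨fun v => hV.elim v, fun v => hV.elim v⟩
    by_cases hdeg : ∀ v, t ≤ (G.neighborSet v).ncard
    · by_cases hst : ∀ u v, G.Adj u v →
        s ≤ (G.neighborSet u).ncard ∨ s ≤ (G.neighborSet v).ncard
      · exact (key t r hrt hR s hs V G hG hdeg hst).elim
      · push Not at hst
        obtain ⟨u, v, huv, hu, hv⟩ := hst
        have hlt : (G.deleteEdges {s(u, v)}).edgeSet.ncard < G.edgeSet.ncard := by
          refine Set.ncard_lt_ncard ?_ (Set.toFinite _)
          rw [SimpleGraph.edgeSet_deleteEdges, Set.ssubset_iff_exists]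
          exact ⟨Set.sdiff_subset, s(u, v), huv, by simp⟩
        obtain ⟨c, hc⟩ := ih _ (by omega) V (G.deleteEdges {s(u, v)}) rfl
          (fun h => hG (minor_of_hom G _ id Function.injective_id
            (fun a b hab => (SimpleGraph.deleteEdges_adj.1 hab).1) h))
        refine ⟨c, fun w => ?_⟩
        have hdw : ∀ w, ({x | c x = c w ∧ G.Adj w x}).ncard ≤ (G.neighborSet w).ncard :=
          fun w => Set.ncard_le_ncard (fun x hx => hx.2) (Set.toFinite _)
        by_cases h1 : w = u
        · subst h1
          have := hdw w
          omega
        by_cases h2 : w = v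
        · subst h2
          have := hdw w
          omega
        · have := hc w
          convert this using 5 with x
          rw [SimpleGraph.deleteEdges_adj]
          simp [h1, h2]
    · push Not at hdeg
      obtain ⟨v, hv⟩ := hdeg
      let W := {w : V // w ≠ v}
      let H : SimpleGraph W := G.comap Subtype.val
      have hWV : Fintype.card W < Fintype.card V := Fintype.card_subtype_lt (x := v) (by simp)
      have hE : H.edgeSet.ncard ≤ G.edgeSet.ncard := by
        rw [← Set.ncard_image_of_injective _
          (Sym2.map.injective (Subtype.val_injective (p := fun w => w ≠ v)))]
        refine Set.ncard_le_ncard ?_ (Set.toFinite _)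
        rintro _ ⟨e, he, rfl⟩
        induction e using Sym2.ind with
        | _ a b => exact he
      obtain ⟨c, hc⟩ := ih _ (by omega) W H rfl
        (fun h => hG (minor_of_hom G H Subtype.val Subtype.val_injective (fun a b hab => hab) h))
      have hex : ∃ i : Fin t, ∀ w : W, G.Adj v w → c w ≠ i := by
        by_contra hcon
        push Not at hcon
        choose f hf1 hf2 using hcon
        have hinj : Function.Injective (fun i => (⟨(f i : V), hf1 i⟩ : G.neighborSet v)) := by
          intro i j hij
          have : f i = f j := Subtype.ext (congrArg (fun b : G.neighborSet v => (b : V)) hij)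
          rw [← hf2 i, ← hf2 j, this]
        have := Nat.card_le_card_of_injective _ hinj
        rw [Nat.card_coe_set_eq, Nat.card_eq_fintype_card, Fintype.card_fin] at this
        omega
      obtain ⟨i, hi⟩ := hex
      let c' : V → Fin t := fun w => if h : w = v then i else c ⟨w, h⟩
      have hc'v : c' v = i := by simp [c']
      have hc'w : ∀ w (h : w ≠ v), c' w = c ⟨w, h⟩ := fun w h => by simp [c', h]
      refine ⟨c', fun w => ?_⟩
      by_cases h : w = v
      · subst h
        have : {u | c' u = c' w ∧ G.Adj w u} = ∅ := by
          ext u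
          simp only [Set.mem_ofPred_eq, Set.mem_empty_iff_false, iff_false]
          rintro ⟨h1, h2⟩
          have hne : u ≠ w := h2.ne.symm
          rw [hc'v, hc'w u hne] at h1
          exact hi ⟨u, hne⟩ h2 h1
        rw [this]
        simpa using hs0
      · have hsub : {u | c' u = c' w ∧ G.Adj w u} ⊆
            Subtype.val '' {u : W | c u = c ⟨w, h⟩ ∧ H.Adj ⟨w, h⟩ u} := by
          rintro u ⟨h1, h2⟩
          have hne : u ≠ v := by
            rintro rfl
            rw [hc'v, hc'w w h] at h1
            exact hi ⟨w, h⟩ h2.symm h1.symm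
          rw [hc'w w h, hc'w u hne] at h1
          exact ⟨⟨u, hne⟩, ⟨h1, h2⟩, rfl⟩
        have h3 := Set.ncard_le_ncard hsub (Set.toFinite _)
        rw [Set.ncard_image_of_injective _ Subtype.val_injective] at h3
        have h4 := hc ⟨w, h⟩
        omega

end DefCol

/-- Given `r > t/2` such that every finite graph with no `K_{t+1}` minor has at most
`r·|V|` edges, and `s` the least integer greater than `r(2r − t + 2)`, every finite
graph `G` with no `K_{t+1}` minor admits a partition of its vertex set into `t` sets,
each inducing a subgraph of maximum degree strictly less than `s`. -/
theorem defective_colouring (t : ℕ) (r : ℝ) (hrt : r > t / 2)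
    (hR : ∀ (W : Type) [Fintype W] (H : SimpleGraph W),
      ¬ HasCompleteMinor H (t + 1) → (Nat.card H.edgeSet : ℝ) ≤ r * Fintype.card W)
    (s : ℤ) (hs : r * (2 * r - t + 2) < s)
    (hsmin : ∀ m : ℤ, r * (2 * r - t + 2) < m → s ≤ m)
    (V : Type) [Fintype V] (G : SimpleGraph V)
    (hG : ¬ HasCompleteMinor G (t + 1)) :
    ∃ X : Fin t → Set V,
      (Pairwise fun i j => Disjoint (X i) (X j)) ∧
      (⋃ i, X i) = Set.univ ∧
      ∀ i, ∀ v ∈ X i, (({u | u ∈ X i ∧ G.Adj v u}).ncard : ℤ) < s := by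
  obtain ⟨c, hc⟩ := DefCol.colour t r hrt hR s hs _ V G rfl hG
  refine ⟨fun i => {v | c v = i}, ?_, ?_, ?_⟩
  · intro i j hij
    rw [Set.disjoint_left]
    intro x hx hy
    exact hij (hx.symm.trans hy)
  · ext v
    simp
  · intro i v hv
    have hv' : c v = i := hv
    subst hv'
    exact hc v
end
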